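/- For every pair of fixed integers d ≥ 0 and k ≥ 2, as the integer b → ∞ (with b > d), b/4 − u_{k;3}(b,d) = (d + 1/2)/b^{2k+2} + (d + 1/2)(3d² + (2k−1)/2)/b^{2k+3} + O(b^{−2k−4}), the implied constant depending on d and k. -/

import Mathlib

open Filter Asymptotics

/-- The `m`-th moment of the Irwin measure:
`u_{k;m}(b,d) = ∑_{l≥0} b^{-l(m+1)} ∑_{n=0}^{b^l-1} [n has exactly k base-b digits d
(padded to length l)] · n^m`. -/
noncomputable def momentU (b d k m : ℕ) : ℝ :=
  ∑' l : ℕ, ((b : ℝ) ^ (l * (m + 1)))⁻¹ *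
    ∑ n ∈ Finset.range (b ^ l),
      (if ((Finset.range l).filter fun i => n / b ^ i % b = d).card = k
        then (n : ℝ) ^ m else 0)

/-!
Splitting off the leading digit expresses the moments `u_{k;m}` of the Irwin measure through the
moments of order at most `m` for `k` and `k - 1`. Lebesgue measure obeys the same recurrence over
all `b` digits, so the defects `E_{k;m} = b / (m + 1) - u_{k;m}` satisfy a linear recurrence without
source term, and `E_{k;0} = 0` for `k ≥ 0`. For `m = 1` it has the exact solution
`E_{k;1} = (d + 1/2) b / (b² - b + 1)^(k + 1)`. For `m = 3` and `k ≥ 1` it reads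
`(b⁴ - b + 1) E_{k;3} = (b³ + (3d² - 3/2) b² + (1/2 - 3d²) b) E_{k;1} + O(b^(-2k))`, where crude
bounds on `E_{k;2}`, `E_{k-1;2}` and `E_{k-1;3}` control the error term.
-/

open Finset

theorem sum_range_mul_eq_sum_sum {M : Type*} [AddCommMonoid M] (f : ℕ → M) (c q : ℕ) :
    ∑ n ∈ range (c * q), f n = ∑ a ∈ range c, ∑ n ∈ range q, f (a * q + n) := by
  induction c with
  | zero => simp
  | succ c ih => rw [Nat.succ_mul, sum_range_add, ih, sum_range_succ]

section CharZero

variable {K : Type*} [Field K] [CharZero K]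

theorem sum_range_sq (n : ℕ) :
    ∑ a ∈ range n, (a : K) ^ 2 = (n : K) * (n - 1) * (2 * n - 1) / 6 := by
  induction n with
  | zero => simp
  | succ n ih =>
    rw [sum_range_succ, ih]
    push_cast
    ring

theorem sum_choose_mul_pow_div_add_one (x : K) (m : ℕ) :
    ∑ j ∈ range (m + 1), (m.choose j : K) * (x ^ (m - j) * (1 / (j + 1))) =
      ((x + 1) ^ (m + 1) - x ^ (m + 1)) / (m + 1) := by
  rw [eq_div_iff (Nat.cast_add_one_ne_zero m), sum_mul, add_comm x, add_pow,
    sum_range_succ' _ (m + 1)]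
  simp only [one_pow, one_mul, Nat.add_sub_add_right, Nat.sub_zero, Nat.choose_zero_right,
    Nat.cast_one, mul_one, add_sub_cancel_right]
  refine sum_congr rfl fun j _ => ?_
  have absorb : ((m : K) + 1) * m.choose j = (m + 1).choose (j + 1) * (j + 1) := by
    exact_mod_cast m.add_one_mul_choose_eq j
  have hj : (j : K) + 1 ≠ 0 := Nat.cast_add_one_ne_zero j
  field_simp
  linear_combination x ^ (m - j) * absorb

-- The moments `1 / (j + 1)` of Lebesgue measure on `[0, 1)` satisfy the self-similarity over all
-- `b` digits that the Irwin measures satisfy up to the exceptional digit.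
theorem sum_choose_mul_sum_pow_div_add_one (b m : ℕ) :
    ∑ j ∈ range (m + 1), (m.choose j : K) * ((∑ a ∈ range b, (a : K) ^ (m - j)) * (1 / (j + 1))) =
      (b : K) ^ (m + 1) / (m + 1) := by
  simp only [sum_mul, mul_sum]
  rw [sum_comm]
  simp only [sum_choose_mul_pow_div_add_one, ← sum_div]
  congr 1
  simpa using sum_range_sub (fun a : ℕ => (a : K) ^ (m + 1)) b

end CharZero

theorem sq_sub_add_one_pos {R : Type*} [Field R] [LinearOrder R] [IsStrictOrderedRing R] (x : R) :
    0 < x ^ 2 - x + 1 := by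
  nlinarith [sq_nonneg (2 * x - 1)]

theorem isBigO_zpow_of_le {m n : ℤ} (h : m ≤ n) :
    (fun b : ℕ => (b : ℝ) ^ m) =O[atTop] fun b : ℕ => (b : ℝ) ^ n := by
  refine IsBigO.of_norm_eventuallyLE ?_
  filter_upwards [eventually_ge_atTop 1] with b hb
  rw [Real.norm_of_nonneg (by positivity)]
  exact zpow_le_zpow_right₀ (by exact_mod_cast hb) h

theorem isBigO_mul_zpow {f g : ℕ → ℝ} {m n r : ℤ} (hf : f =O[atTop] fun b : ℕ => (b : ℝ) ^ m)
    (hg : g =O[atTop] fun b : ℕ => (b : ℝ) ^ n) (h : m + n ≤ r) :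
    (fun b => f b * g b) =O[atTop] fun b : ℕ => (b : ℝ) ^ r := by
  refine ((hf.mul hg).congr' .rfl ?_).trans (isBigO_zpow_of_le h)
  filter_upwards [eventually_ne_atTop 0] with b hb
  rw [zpow_add₀ (Nat.cast_ne_zero.2 hb)]

theorem isBigO_const_mul_pow_div_pow (c : ℝ) (i j : ℕ) {r : ℤ} (h : (i : ℤ) - j ≤ r) :
    (fun b : ℕ => c * b ^ i / b ^ j) =O[atTop] fun b : ℕ => (b : ℝ) ^ r := by
  refine (((isBigO_refl _ _).const_mul_left c).congr' ?_ .rfl).trans (isBigO_zpow_of_le h)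
  filter_upwards [eventually_ne_atTop 0] with b hb
  rw [zpow_sub₀ (Nat.cast_ne_zero.2 hb), zpow_natCast, zpow_natCast, mul_div_assoc]

theorem isBigO_inv_pow_sub_add_one {p : ℕ} (hp : 2 ≤ p) :
    (fun b : ℕ => ((b : ℝ) ^ p - b + 1)⁻¹) =O[atTop] fun b : ℕ => (b : ℝ) ^ (-p : ℤ) := by
  simp only [zpow_neg, zpow_natCast]
  refine IsBigO.inv_rev (.of_bound 2 ?_) ?_
  · filter_upwards [eventually_ge_atTop 2] with b hb
    have hb : (2 : ℝ) ≤ b := by exact_mod_cast hb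
    have : (b : ℝ) ^ 2 ≤ b ^ p := pow_le_pow_right₀ (by linarith) hp
    rw [Real.norm_of_nonneg (by positivity), Real.norm_of_nonneg (by nlinarith)]
    nlinarith
  · filter_upwards [eventually_ne_atTop 0] with b hb h
    exact absurd h (pow_ne_zero _ (Nat.cast_ne_zero.2 hb))

theorem isBigO_of_pow_sub_add_one_mul_eq {f g : ℕ → ℝ} {p : ℕ} {r s : ℤ} (hp : 2 ≤ p)
    (hg : g =O[atTop] fun b : ℕ => (b : ℝ) ^ s) (hs : s ≤ r + p)
    (h : ∀ᶠ b : ℕ in atTop, ((b : ℝ) ^ p - b + 1) * f b = g b) :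
    f =O[atTop] fun b : ℕ => (b : ℝ) ^ r := by
  refine (isBigO_mul_zpow (isBigO_inv_pow_sub_add_one hp) hg (by lia)).congr' ?_ .rfl
  filter_upwards [h, eventually_ge_atTop 1] with b hfg hb
  have hb : (1 : ℝ) ≤ b := by exact_mod_cast hb
  have : (b : ℝ) ≤ b ^ p := le_self_pow₀ hb (by lia)
  rw [← hfg, inv_mul_cancel_left₀ (by linarith)]

theorem isBigO_inv_sq_sub_add_one_pow_sub (n : ℕ) :
    (fun b : ℕ => (((b : ℝ) ^ 2 - b + 1) ^ n)⁻¹ - (1 + n / b : ℝ) / (b : ℝ) ^ (2 * n)) =O[atTop]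
      fun b : ℕ => (b : ℝ) ^ (-2 * n - 2 : ℤ) := by
  induction n with
  | zero => simpa using isBigO_zero _ _
  | succ n ih =>
    have remainder := (ih.add
      (isBigO_const_mul_pow_div_pow n 1 (2 * n + 3) (r := -2 * n - 2) (by lia))).sub
      (isBigO_const_mul_pow_div_pow (n + 1) 0 (2 * n + 3) (r := -2 * n - 2) (by lia))
    refine isBigO_of_pow_sub_add_one_mul_eq le_rfl remainder (by lia) ?_
    filter_upwards [eventually_ne_atTop 0] with b hb
    have hb : (b : ℝ) ≠ 0 := Nat.cast_ne_zero.2 hb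
    have hQ := (sq_sub_add_one_pos (b : ℝ)).ne'
    rw [mul_sub, pow_succ' _ n, mul_inv, mul_inv_cancel_left₀ hQ]
    push_cast
    field_simp
    ring

/-- The number of occurrences of the digit `d` among the `l` lowest base-`b` digits of `n`. -/
def digitCount (b d l n : ℕ) : ℕ := #{i ∈ range l | n / b ^ i % b = d}

/-- The `m`-th moment of the level-`l` part of the Irwin measure: mass `b⁻ˡ` at each `n / bˡ` whose
`l` digits contain `d` exactly `k` times. The index `k` ranges over `ℤ`, so that the recurrence
relating `k` to `k - 1` has no exceptional case at `k = 0`. -/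
noncomputable def levelMoment (b d : ℕ) (k : ℤ) (m l : ℕ) : ℝ :=
  ((b : ℝ) ^ l)⁻¹ * ∑ n ∈ range (b ^ l) with (digitCount b d l n : ℤ) = k, (n / b ^ l : ℝ) ^ m

/-- The moments `u_{k;m}(b,d)` of the Irwin measure, extended by zero to negative `k`. -/
noncomputable def irwinMoment (b d : ℕ) (k : ℤ) (m : ℕ) : ℝ := ∑' l, levelMoment b d k m l

/-- The sum of the `i`-th powers of the base-`b` digits other than `d`. -/
noncomputable def otherDigitPowSum (b d i : ℕ) : ℝ := ∑ a ∈ (range b).erase d, (a : ℝ) ^ i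

theorem momentU_eq_irwinMoment (b d k m : ℕ) : momentU b d k m = irwinMoment b d k m := by
  refine tsum_congr fun l => ?_
  simp only [levelMoment, digitCount, Nat.cast_inj, sum_filter, mul_sum]
  refine sum_congr rfl fun n _ => ?_
  split_ifs
  · rw [mul_add_one, pow_add, mul_inv, div_pow, ← pow_mul]
    ring
  · simp only [mul_zero]

theorem levelMoment_zero_right (b d : ℕ) (k : ℤ) (m : ℕ) :
    levelMoment b d k m 0 = if k = 0 ∧ m = 0 then 1 else 0 := by
  by_cases hk : k = 0 <;> simp [levelMoment, digitCount, zero_pow_eq, hk, eq_comm]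

theorem levelMoment_nonneg (b d : ℕ) (k : ℤ) (m l : ℕ) : 0 ≤ levelMoment b d k m l :=
  mul_nonneg (by positivity) (sum_nonneg fun _ _ => by positivity)

theorem levelMoment_le_levelMoment_zero (b d : ℕ) (k : ℤ) (m l : ℕ) :
    levelMoment b d k m l ≤ levelMoment b d k 0 l := by
  refine mul_le_mul_of_nonneg_left (sum_le_sum fun n hn => ?_) (by positivity)
  have hn : (n : ℝ) ≤ b ^ l := by exact_mod_cast (mem_range.1 (mem_filter.1 hn).1).le
  rw [pow_zero]
  exact pow_le_one₀ (by positivity) (div_le_one_of_le₀ hn (by positivity))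

theorem sum_add_div_pow_eq_sum_levelMoment (b d : ℕ) (k : ℤ) (m l : ℕ) (x : ℝ) :
    ((b : ℝ) ^ l)⁻¹ * ∑ n ∈ range (b ^ l) with (digitCount b d l n : ℤ) = k,
        (x + n / b ^ l : ℝ) ^ m =
      ∑ j ∈ range (m + 1), (m.choose j : ℝ) * (x ^ (m - j) * levelMoment b d k j l) := by
  simp only [levelMoment, mul_sum]
  rw [sum_comm]
  refine sum_congr rfl fun n _ => ?_
  rw [add_comm, add_pow, mul_sum]
  exact sum_congr rfl fun j _ => by ring

section Digits

variable {b d : ℕ}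

theorem digitCount_mul_pow_add {l n a : ℕ} (ha : a < b) (hn : n < b ^ l) :
    digitCount b d (l + 1) (a * b ^ l + n) = digitCount b d l n + if a = d then 1 else 0 := by
  have hb : 0 < b := by lia
  have leading : (a * b ^ l + n) / b ^ l % b = a := by
    rw [Nat.add_comm, Nat.add_mul_div_right _ _ (pow_pos hb l), Nat.div_eq_of_lt hn, zero_add,
      Nat.mod_eq_of_lt ha]
  have lower : ∀ i ∈ range l, (a * b ^ l + n) / b ^ i % b = n / b ^ i % b := by
    intro i hi
    obtain ⟨t, rfl⟩ := Nat.exists_eq_add_of_lt (mem_range.1 hi)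
    have : a * b ^ (i + t + 1) + n = n + (a * b ^ t * b) * b ^ i := by ring
    rw [this, Nat.add_mul_div_right _ _ (pow_pos hb i), Nat.add_mul_mod_self_right]
  unfold digitCount
  rw [range_add_one, filter_insert, leading, filter_congr fun i hi => by rw [lower i hi]]
  split_ifs
  · rw [card_insert_of_notMem (by simp)]
  · rfl

theorem levelMoment_of_neg {k : ℤ} (hk : k < 0) (m l : ℕ) : levelMoment b d k m l = 0 := by
  rw [levelMoment, filter_false_of_mem fun n _ => by lia, sum_empty, mul_zero]

-- Split off the leading digit `a`: the point `(a bˡ + n) / bˡ⁺¹` is `(a + n / bˡ) / b`.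
theorem pow_mul_levelMoment_succ_eq_sum_digits (hb : 0 < b) (k : ℤ) (m l : ℕ) :
    (b : ℝ) ^ (m + 1) * levelMoment b d k m (l + 1) =
      ∑ a ∈ range b, ((b : ℝ) ^ l)⁻¹ *
        ∑ n ∈ range (b ^ l) with (digitCount b d l n : ℤ) = k - if a = d then 1 else 0,
          (a + n / b ^ l : ℝ) ^ m := by
  have hb' : (b : ℝ) ≠ 0 := by positivity
  rw [levelMoment, sum_filter, pow_succ' b l, sum_range_mul_eq_sum_sum, ← mul_sum, ← mul_assoc,
    mul_sum, mul_sum]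
  refine sum_congr rfl fun a ha => ?_
  rw [sum_filter, mul_sum, mul_sum]
  refine sum_congr rfl fun n hn => ?_
  have rescaled : (b : ℝ) ^ (m + 1) * ((b : ℝ) ^ (l + 1))⁻¹ *
      ((a * b ^ l + n : ℕ) / b ^ (l + 1) : ℝ) ^ m = ((b : ℝ) ^ l)⁻¹ * (a + n / b ^ l : ℝ) ^ m := by
    have : ((a * b ^ l + n : ℕ) / b ^ (l + 1) : ℝ) = (a + n / b ^ l) / b := by
      push_cast
      field_simp
      ring
    rw [this, div_pow]
    field_simp
    ring
  rw [digitCount_mul_pow_add (mem_range.1 ha) (mem_range.1 hn), Nat.cast_add, Nat.cast_ite,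
    Nat.cast_one, Nat.cast_zero]
  simp only [← eq_sub_iff_add_eq, mul_ite, rescaled, mul_zero]

theorem pow_mul_levelMoment_succ (hd : d < b) (k : ℤ) (m l : ℕ) :
    (b : ℝ) ^ (m + 1) * levelMoment b d k m (l + 1) =
      ∑ j ∈ range (m + 1), (m.choose j : ℝ) *
        (otherDigitPowSum b d (m - j) * levelMoment b d k j l +
          (d : ℝ) ^ (m - j) * levelMoment b d (k - 1) j l) := by
  rw [pow_mul_levelMoment_succ_eq_sum_digits (by lia), ← sum_erase_add _ _ (mem_range.2 hd)]
  simp only [sum_add_div_pow_eq_sum_levelMoment, mul_add, sum_add_distrib, if_true]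
  congr 1
  rw [sum_comm]
  refine sum_congr rfl fun j _ => ?_
  rw [otherDigitPowSum, sum_mul, mul_sum]
  exact sum_congr rfl fun a ha => by rw [if_neg (ne_of_mem_erase ha), sub_zero]

theorem otherDigitPowSum_add_pow (hd : d < b) (i : ℕ) :
    otherDigitPowSum b d i + (d : ℝ) ^ i = ∑ a ∈ range b, (a : ℝ) ^ i :=
  sum_erase_add _ _ (mem_range.2 hd)

theorem otherDigitPowSum_zero (hd : d < b) : otherDigitPowSum b d 0 = b - 1 := by
  have := otherDigitPowSum_add_pow hd 0
  simp only [pow_zero, sum_const, card_range, nsmul_one] at this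
  linarith

theorem levelMoment_natCast_zero (hd : d < b) (k l : ℕ) :
    levelMoment b d k 0 l = l.choose k * ((b : ℝ) - 1) ^ (l - k) / b ^ l := by
  have hb : (b : ℝ) ≠ 0 := by norm_cast; lia
  have recurrence (k : ℤ) (l : ℕ) : levelMoment b d k 0 (l + 1) =
      (((b : ℝ) - 1) * levelMoment b d k 0 l + levelMoment b d (k - 1) 0 l) / b := by
    rw [eq_div_iff hb, mul_comm]
    simpa [otherDigitPowSum_zero hd] using pow_mul_levelMoment_succ hd k 0 l
  induction l generalizing k with
  | zero => cases k <;> simp [levelMoment_zero_right]; lia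
  | succ l ih =>
    rw [recurrence, ih]
    cases k with
    | zero =>
      rw [levelMoment_of_neg (by simp)]
      simp only [Nat.choose_zero_right, Nat.sub_zero]
      field_simp
      ring
    | succ k =>
      rw [Nat.cast_succ, add_sub_cancel_right, ih, Nat.choose_succ_succ, Nat.succ_sub_succ]
      have : (l.choose (k + 1) : ℝ) * ((b : ℝ) - 1) ^ (l - k) =
          ((b : ℝ) - 1) * (l.choose (k + 1) * ((b : ℝ) - 1) ^ (l - (k + 1))) := by
        rcases lt_or_ge k l with h | h
        · rw [show l - k = l - (k + 1) + 1 by lia]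
          ring
        · rw [Nat.choose_eq_zero_of_lt (by lia)]
          simp
      rw [← mul_div_assoc, ← this, pow_succ, ← add_div, div_div]
      push_cast
      ring

theorem hasSum_levelMoment_zero (hd : d < b) (k : ℕ) : HasSum (levelMoment b d k 0) b := by
  have hb : (1 : ℝ) ≤ b := by norm_cast; lia
  have hb' : (b : ℝ) ≠ 0 := by positivity
  have ratio_lt_one : ‖((b : ℝ) - 1) / b‖ < 1 := by
    rw [Real.norm_of_nonneg (div_nonneg (by linarith) (by linarith)), div_lt_one (by linarith)]
    linarith
  rw [← hasSum_nat_add_iff' k, sum_eq_zero, sub_zero]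
  · convert! (hasSum_choose_mul_geometric_of_norm_lt_one k ratio_lt_one).div_const ((b : ℝ) ^ k)
      using 1
    · ext n
      rw [levelMoment_natCast_zero hd, Nat.add_sub_cancel, div_pow, pow_add]
      field_simp
    · rw [one_sub_div hb', div_pow]
      field_simp
      ring
  · intro l hl
    rw [levelMoment_natCast_zero hd, Nat.choose_eq_zero_of_lt (mem_range.1 hl)]
    simp

theorem summable_levelMoment (hd : d < b) (k : ℤ) (m : ℕ) : Summable (levelMoment b d k m) := by
  refine .of_nonneg_of_le (levelMoment_nonneg b d k m) (levelMoment_le_levelMoment_zero b d k m) ?_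
  rcases lt_or_ge k 0 with hk | hk
  · simpa only [funext (levelMoment_of_neg hk 0)] using summable_zero
  · lift k to ℕ using hk
    exact (hasSum_levelMoment_zero hd k).summable

theorem irwinMoment_natCast_zero (hd : d < b) (k : ℕ) : irwinMoment b d k 0 = b :=
  (hasSum_levelMoment_zero hd k).tsum_eq

theorem irwinMoment_of_neg {k : ℤ} (hk : k < 0) (m : ℕ) : irwinMoment b d k m = 0 := by
  simp only [irwinMoment, levelMoment_of_neg hk, tsum_zero]

theorem pow_mul_irwinMoment (hd : d < b) (k : ℤ) {m : ℕ} (hm : m ≠ 0) :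
    (b : ℝ) ^ (m + 1) * irwinMoment b d k m =
      ∑ j ∈ range (m + 1), (m.choose j : ℝ) *
        (otherDigitPowSum b d (m - j) * irwinMoment b d k j +
          (d : ℝ) ^ (m - j) * irwinMoment b d (k - 1) j) := by
  have hs (k : ℤ) (j : ℕ) := (summable_levelMoment hd k j).hasSum
  have level_zero : levelMoment b d k m 0 = 0 := by simp [levelMoment_zero_right, hm]
  rw [irwinMoment, (hs k m).summable.tsum_eq_zero_add, level_zero, zero_add, ← tsum_mul_left]
  simp only [pow_mul_levelMoment_succ hd]
  exact (hasSum_sum fun j _ =>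
    (((hs k j).mul_left _).add ((hs (k - 1) j).mul_left _)).mul_left _).tsum_eq

end Digits

/-- The amount `b / (m + 1) - u_{k;m}(b,d)` by which the `m`-th moment of the Irwin measure falls
short of that of `b` times Lebesgue measure on `[0, 1)`. -/
noncomputable def momentDefect (d : ℕ) (k : ℤ) (m b : ℕ) : ℝ := b / (m + 1) - irwinMoment b d k m

section Defect

variable {b d : ℕ}

theorem momentDefect_zero_of_nonneg (hd : d < b) {k : ℤ} (hk : 0 ≤ k) :
    momentDefect d k 0 b = 0 := by
  lift k to ℕ using hk
  simp [momentDefect, irwinMoment_natCast_zero hd]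

theorem momentDefect_of_neg {k : ℤ} (hk : k < 0) (m : ℕ) : momentDefect d k m b = b / (m + 1) := by
  rw [momentDefect, irwinMoment_of_neg hk, sub_zero]

theorem pow_mul_momentDefect (hd : d < b) (k : ℤ) {m : ℕ} (hm : m ≠ 0) :
    (b : ℝ) ^ (m + 1) * momentDefect d k m b =
      ∑ j ∈ range (m + 1), (m.choose j : ℝ) *
        (otherDigitPowSum b d (m - j) * momentDefect d k j b +
          (d : ℝ) ^ (m - j) * momentDefect d (k - 1) j b) := by
  have lebesgue : (b : ℝ) ^ (m + 1) * (b / (m + 1)) =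
      ∑ j ∈ range (m + 1), (m.choose j : ℝ) *
        (otherDigitPowSum b d (m - j) * (b / (j + 1)) + (d : ℝ) ^ (m - j) * (b / (j + 1))) := by
    rw [mul_div_left_comm, ← sum_choose_mul_sum_pow_div_add_one, mul_sum]
    refine sum_congr rfl fun j _ => ?_
    rw [← otherDigitPowSum_add_pow hd]
    ring
  simp only [momentDefect]
  rw [mul_sub, lebesgue, pow_mul_irwinMoment hd k hm, ← sum_sub_distrib]
  exact sum_congr rfl fun j _ => by ring

theorem pow_sub_add_one_mul_momentDefect (hd : d < b) (k : ℤ) {m : ℕ} (hm : m ≠ 0) :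
    ((b : ℝ) ^ (m + 1) - b + 1) * momentDefect d k m b =
      momentDefect d (k - 1) m b +
        ∑ j ∈ range m, (m.choose j : ℝ) *
          (otherDigitPowSum b d (m - j) * momentDefect d k j b +
            (d : ℝ) ^ (m - j) * momentDefect d (k - 1) j b) := by
  have h := pow_mul_momentDefect hd k hm
  rw [sum_range_succ, Nat.sub_self, Nat.choose_self, otherDigitPowSum_zero hd] at h
  linear_combination h

theorem sq_sub_add_one_mul_momentDefect_one (hd : d < b) {k : ℤ} (hk : 1 ≤ k) :
    ((b : ℝ) ^ 2 - b + 1) * momentDefect d k 1 b = momentDefect d (k - 1) 1 b := by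
  have h := pow_sub_add_one_mul_momentDefect hd k one_ne_zero
  rw [sum_range_one, momentDefect_zero_of_nonneg hd (by lia),
    momentDefect_zero_of_nonneg hd (by lia)] at h
  simpa using h

theorem momentDefect_one (hd : d < b) (k : ℕ) :
    momentDefect d k 1 b = (d + 1 / 2) * (b * (((b : ℝ) ^ 2 - b + 1) ^ (k + 1))⁻¹) := by
  have hQ := (sq_sub_add_one_pos (b : ℝ)).ne'
  induction k with
  | zero =>
    have h := pow_sub_add_one_mul_momentDefect hd 0 one_ne_zero
    have hneg : (0 : ℤ) - 1 < 0 := by simp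
    rw [sum_range_one, momentDefect_zero_of_nonneg hd le_rfl, momentDefect_of_neg hneg,
      momentDefect_of_neg hneg] at h
    simp only [Nat.choose_zero_right, Nat.cast_zero, Nat.cast_one, Nat.sub_zero] at h
    rw [zero_add, pow_one, ← mul_assoc, ← div_eq_mul_inv, eq_div_iff hQ, Nat.cast_zero]
    linear_combination h
  | succ k ih =>
    have h := sq_sub_add_one_mul_momentDefect_one hd (k := (k + 1 : ℕ)) (by lia)
    rw [Nat.cast_succ, add_sub_cancel_right, ih] at h
    rw [Nat.cast_succ, ← mul_right_inj' hQ, h, pow_succ _ (k + 1), mul_inv]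
    linear_combination (-(d + 1 / 2) * b * (((b : ℝ) ^ 2 - b + 1) ^ (k + 1))⁻¹) * mul_inv_cancel₀ hQ

theorem pow_four_sub_add_one_mul_momentDefect_three (hd : d < b) {k : ℤ} (hk : 1 ≤ k) :
    ((b : ℝ) ^ 4 - b + 1) * momentDefect d k 3 b =
      ((b : ℝ) ^ 3 + (3 * d ^ 2 - 3 / 2) * b ^ 2 + (1 / 2 - 3 * d ^ 2) * b) *
          momentDefect d k 1 b +
        (3 * (otherDigitPowSum b d 1 * momentDefect d k 2 b) +
          3 * d * momentDefect d (k - 1) 2 b + momentDefect d (k - 1) 3 b) := by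
  have hk₀ : 0 ≤ k := by lia
  have hk₁ : 0 ≤ k - 1 := by lia
  have h := pow_sub_add_one_mul_momentDefect hd k three_ne_zero
  have hone := sq_sub_add_one_mul_momentDefect_one hd hk
  have htwo := (otherDigitPowSum_add_pow hd 2).trans (sum_range_sq b)
  simp only [sum_range_succ, sum_range_zero, zero_add, momentDefect_zero_of_nonneg hd hk₀,
    momentDefect_zero_of_nonneg hd hk₁, mul_zero, add_zero, Nat.choose, Nat.reduceAdd,
    Nat.reduceSub, pow_one, Nat.cast_ofNat] at h
  linear_combination h + 3 * momentDefect d k 1 b * htwo - 3 * d ^ 2 * hone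

end Defect

theorem isBigO_otherDigitPowSum (d i : ℕ) :
    (fun b => otherDigitPowSum b d i) =O[atTop] fun b : ℕ => (b : ℝ) ^ (i + 1 : ℤ) := by
  refine IsBigO.of_norm_le fun b => ?_
  have nonneg : 0 ≤ otherDigitPowSum b d i := sum_nonneg fun _ _ => by positivity
  rw [Real.norm_of_nonneg nonneg]
  calc otherDigitPowSum b d i ≤ ∑ a ∈ range b, (a : ℝ) ^ i :=
        sum_le_sum_of_subset_of_nonneg (erase_subset _ _) fun _ _ _ => by positivity
    _ ≤ ∑ _ ∈ range b, (b : ℝ) ^ i := by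
        gcongr with a ha
        exact (mem_range.1 ha).le
    _ = (b : ℝ) ^ (i + 1 : ℤ) := by
        rw [sum_const, card_range, nsmul_eq_mul, ← pow_succ', ← zpow_natCast, Nat.cast_succ]

theorem isBigO_momentDefect_of_forall_lt (d : ℕ) {k : ℤ} {m : ℕ} (hm : m ≠ 0) {r : ℤ}
    (prev : momentDefect d (k - 1) m =O[atTop] fun b : ℕ => (b : ℝ) ^ (r + m + 1))
    (lower : ∀ j < m, (fun b => otherDigitPowSum b d (m - j) * momentDefect d k j b)
      =O[atTop] fun b : ℕ => (b : ℝ) ^ (r + m + 1))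
    (lower_prev : ∀ j < m, momentDefect d (k - 1) j
      =O[atTop] fun b : ℕ => (b : ℝ) ^ (r + m + 1)) :
    momentDefect d k m =O[atTop] fun b : ℕ => (b : ℝ) ^ r := by
  have rhs : (fun b => momentDefect d (k - 1) m b + ∑ j ∈ range m, (m.choose j : ℝ) *
      (otherDigitPowSum b d (m - j) * momentDefect d k j b +
        (d : ℝ) ^ (m - j) * momentDefect d (k - 1) j b))
      =O[atTop] fun b : ℕ => (b : ℝ) ^ (r + m + 1) :=
    prev.add (.fun_sum fun j hj => ((lower j (mem_range.1 hj)).add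
      ((lower_prev j (mem_range.1 hj)).const_mul_left _)).const_mul_left _)
  refine isBigO_of_pow_sub_add_one_mul_eq (p := m + 1) (by lia) rhs (by lia) ?_
  filter_upwards [eventually_gt_atTop d] with b hd
  exact pow_sub_add_one_mul_momentDefect hd k hm

theorem isBigO_momentDefect_zero (d : ℕ) {k : ℤ} (hk : 0 ≤ k) (r : ℤ) :
    momentDefect d k 0 =O[atTop] fun b : ℕ => (b : ℝ) ^ r := by
  refine (isBigO_zero _ _).congr' ?_ .rfl
  filter_upwards [eventually_gt_atTop d] with b hd
  exact (momentDefect_zero_of_nonneg hd hk).symm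

theorem isBigO_momentDefect (d : ℕ) {k : ℤ} (hk : -1 ≤ k) (m : ℕ) :
    momentDefect d k m =O[atTop] fun b : ℕ => (b : ℝ) ^ (-2 * k - 1) := by
  induction k, hk using Int.leInduction generalizing m with
  | base =>
    have := isBigO_const_mul_pow_div_pow (1 / (m + 1)) 1 0 (r := -2 * -1 - 1) (by lia)
    refine this.congr_left fun b => ?_
    rw [momentDefect_of_neg (by lia)]
    ring
  | succ k hk ih =>
    have prev {m j : ℕ} (hm : m ≠ 0) : momentDefect d (k + 1 - 1) j =O[atTop]
        fun b : ℕ => (b : ℝ) ^ (-2 * (k + 1) - 1 + m + 1) := by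
      rw [add_sub_cancel_right]
      exact (ih j).trans (isBigO_zpow_of_le (by lia))
    induction m using Nat.strong_induction_on with
    | h m ihm =>
      rcases eq_or_ne m 0 with rfl | hm
      · exact isBigO_momentDefect_zero d (by lia) _
      · exact isBigO_momentDefect_of_forall_lt d hm (prev hm)
          (fun j hj => isBigO_mul_zpow (isBigO_otherDigitPowSum d _) (ihm j hj) (by lia))
          (fun _ _ => prev hm)

theorem isBigO_momentDefect_of_two_le (d : ℕ) {k : ℤ} (hk : 0 ≤ k) {m : ℕ} (hm : 2 ≤ m) :
    momentDefect d k m =O[atTop] fun b : ℕ => (b : ℝ) ^ (-2 * k - 2) := by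
  have prev (j : ℕ) : momentDefect d (k - 1) j =O[atTop]
      fun b : ℕ => (b : ℝ) ^ (-2 * k - 2 + m + 1) :=
    (isBigO_momentDefect d (by lia) j).trans (isBigO_zpow_of_le (by lia))
  refine isBigO_momentDefect_of_forall_lt d (by lia) (prev m) (fun j hj => ?_) fun j _ => prev j
  rcases eq_or_ne j 0 with rfl | hj₀
  · exact isBigO_mul_zpow (isBigO_otherDigitPowSum d _)
      (isBigO_momentDefect_zero d hk (-2 * k - 2)) (by lia)
  · exact isBigO_mul_zpow (isBigO_otherDigitPowSum d _)
      (isBigO_momentDefect d (by lia) j) (by lia)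

theorem isBigO_momentDefect_one_sub (d k : ℕ) :
    (fun b : ℕ => momentDefect d k 1 b -
        ((d : ℝ) + 1 / 2) * (1 + (k + 1) / b) / (b : ℝ) ^ (2 * k + 1))
      =O[atTop] fun b : ℕ => (b : ℝ) ^ (-2 * k - 3 : ℤ) := by
  have h := isBigO_mul_zpow (r := -2 * k - 3)
    (isBigO_const_mul_pow_div_pow (d + 1 / 2) 1 0 (r := 1) (by simp))
    (isBigO_inv_sq_sub_add_one_pow_sub (k + 1)) (by lia)
  refine h.congr' ?_ .rfl
  filter_upwards [eventually_gt_atTop d] with b hd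
  have hb : (b : ℝ) ≠ 0 := by norm_cast; lia
  rw [momentDefect_one hd]
  push_cast
  field_simp
  ring

theorem isBigO_momentDefect_three_lower_order (d : ℕ) {k : ℤ} (hk : 1 ≤ k) :
    (fun b => 3 * (otherDigitPowSum b d 1 * momentDefect d k 2 b) +
        3 * d * momentDefect d (k - 1) 2 b + momentDefect d (k - 1) 3 b)
      =O[atTop] fun b : ℕ => (b : ℝ) ^ (-2 * k) := by
  have prev {m : ℕ} (hm : 2 ≤ m) :
      momentDefect d (k - 1) m =O[atTop] fun b : ℕ => (b : ℝ) ^ (-2 * k) :=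
    (isBigO_momentDefect_of_two_le d (by lia) hm).trans (isBigO_zpow_of_le (by lia))
  have current := isBigO_mul_zpow (r := -2 * k) (isBigO_otherDigitPowSum d 1)
    (isBigO_momentDefect_of_two_le d (k := k) (by lia) le_rfl) (by lia)
  exact ((current.const_mul_left 3).add ((prev le_rfl).const_mul_left _)).add (prev (by lia))

theorem isBigO_momentDefect_three_sub (d : ℕ) {k : ℕ} (hk : 1 ≤ k) :
    (fun b : ℕ => momentDefect d k 3 b -
        (((d : ℝ) + 1 / 2) / (b : ℝ) ^ (2 * k + 2) + ((d : ℝ) + 1 / 2) *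
          (3 * (d : ℝ) ^ 2 + (2 * (k : ℝ) - 1) / 2) / (b : ℝ) ^ (2 * k + 3)))
      =O[atTop] fun b : ℕ => (b : ℝ) ^ (-2 * k - 4 : ℤ) := by
  have coefficient : (fun b : ℕ => 1 * (b : ℝ) ^ 3 / b ^ 0 + (3 * d ^ 2 - 3 / 2) * b ^ 2 / b ^ 0 +
      (1 / 2 - 3 * d ^ 2) * b ^ 1 / b ^ 0) =O[atTop] fun b : ℕ => (b : ℝ) ^ (3 : ℤ) :=
    ((isBigO_const_mul_pow_div_pow _ _ _ (by lia)).add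
      (isBigO_const_mul_pow_div_pow _ _ _ (by lia))).add
      (isBigO_const_mul_pow_div_pow _ _ _ (by lia))
  have main := isBigO_mul_zpow (r := -2 * k) coefficient (isBigO_momentDefect_one_sub d k) (by lia)
  have small (c : ℝ) (i : ℕ) (hi : i ≤ 3) :=
    isBigO_const_mul_pow_div_pow (r := -2 * k) c i (2 * k + 3) (by lia)
  set c : ℝ := d + 1 / 2
  set α : ℝ := 3 * d ^ 2 - 3 / 2 with hα
  set β : ℝ := 1 / 2 - 3 * d ^ 2 with hβ
  -- What remains of `(b³ + α b² + β b) E_{k;1} - (b⁴ - b + 1) E_{k;3}` after replacing both defects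
  -- by their truncated expansions: the two highest powers of `b` cancel.
  have expansions := (((small (c * (α * (k + 1) + β)) 3 (by lia)).add
    (small (c * (β * (k + 1) + 1)) 2 (by lia))).add (small (c * (k + α)) 1 (by lia))).sub
    (small (c * (k + α + 1)) 0 (by lia))
  refine isBigO_of_pow_sub_add_one_mul_eq (p := 4) (by lia)
    ((main.add (isBigO_momentDefect_three_lower_order d (k := k) (by lia))).add expansions)
    (by lia) ?_
  filter_upwards [eventually_gt_atTop d] with b hd
  have hb : (b : ℝ) ≠ 0 := by norm_cast; lia
  rw [mul_sub, pow_four_sub_add_one_mul_momentDefect_three hd (by lia)]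
  have : 3 * (d : ℝ) ^ 2 + (2 * (k : ℝ) - 1) / 2 = k + α + 1 := by rw [hα]; ring
  rw [this, ← hα, ← hβ]
  field_simp
  ring

theorem momentU_three_asymptotic_general (d k : ℕ) (hk : 1 ≤ k) :
    (fun b : ℕ => (b : ℝ) / 4 - momentU b d k 3 -
      (((d : ℝ) + 1 / 2) / (b : ℝ) ^ (2 * k + 2)
        + ((d : ℝ) + 1 / 2) * (3 * (d : ℝ) ^ 2 + (2 * (k : ℝ) - 1) / 2) / (b : ℝ) ^ (2 * k + 3)))
      =O[atTop] fun b : ℕ => ((b : ℝ) ^ (2 * k + 4))⁻¹ := by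
  refine (isBigO_momentDefect_three_sub d hk).congr (fun b => ?_) fun b => ?_
  · rw [momentDefect, momentU_eq_irwinMoment]
    norm_num
  · rw [← zpow_natCast, ← zpow_neg]
    congr 1
    push_cast
    ring

theorem momentU_three_asymptotic (d k : ℕ) (hk : 2 ≤ k) :
    (fun b : ℕ => (b : ℝ) / 4 - momentU b d k 3 -
      (((d : ℝ) + 1 / 2) / (b : ℝ) ^ (2 * k + 2)
        + ((d : ℝ) + 1 / 2) * (3 * (d : ℝ) ^ 2 + (2 * (k : ℝ) - 1) / 2) / (b : ℝ) ^ (2 * k + 3)))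
      =O[atTop] fun b : ℕ => ((b : ℝ) ^ (2 * k + 4))⁻¹ :=
  momentU_three_asymptotic_general d k (by lia)
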